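/- The number of decompositions of the edge polytope of the complete graph K_d equals 2^{d-1} - d - 1. -/

import Mathlib

open scoped BigOperators

/-- `ρ(i,j) = e_i + e_j` -/
noncomputable def rho {d : ℕ} (i j : Fin d) : Fin d → ℝ :=
  fun t => (if t = i then 1 else 0) + (if t = j then 1 else 0)

/-- The edge polytope of a graph `G` on `[d]`. -/
noncomputable def edgePolytope {d : ℕ} (G : SimpleGraph (Fin d)) : Set (Fin d → ℝ) :=
  convexHull ℝ {x | ∃ i j, G.Adj i j ∧ x = rho i j}

/-- dot product -/
def dotp {d : ℕ} (a x : Fin d → ℝ) : ℝ := ∑ t, a t * x t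

/-- a polytope is integral if all its vertices (extreme points) are lattice points -/
def IsIntegralSet {d : ℕ} (P : Set (Fin d → ℝ)) : Prop :=
  ∀ x ∈ Set.extremePoints ℝ P, ∀ t, ∃ z : ℤ, x t = (z : ℝ)

/-- The hyperplane `a·x = b` decomposes `P`: it meets the relative interior of `P`,
both open sides meet `P`, and both closed half-space pieces are integral. -/
def Decomposes {d : ℕ} (P : Set (Fin d → ℝ)) (a : Fin d → ℝ) (b : ℝ) : Prop :=
  (∃ x ∈ intrinsicInterior ℝ P, dotp a x = b) ∧
  (∃ y ∈ P, dotp a y < b) ∧ (∃ y ∈ P, b < dotp a y) ∧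
  IsIntegralSet (P ∩ {x | b ≤ dotp a x}) ∧
  IsIntegralSet (P ∩ {x | dotp a x ≤ b})

/-!
The edge polytope of `K_d` is the hypersimplex `Δ(2)`, on which every affine function `a ⬝ᵥ x - b`
is linear, so a hyperplane amounts to weights `a i + a j` on the edges of `K_d`. If some vertex lies
on both a positive and a negative edge, the hyperplane crosses an edge of the polytope at a
non-lattice vertex of a piece. Otherwise all `a i` are equal up to sign, with at least two of each
sign. Conversely the pieces `1 ≤ ∑ t ∈ S, x t` are integral: a fractional coordinate of a point can
exchange mass with another one, so the point is no vertex. The pieces determine `S` up to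
complement, and there are `2 ^ d - 2 * (d + 1)` sets `S` with at least two elements both inside and
outside.
-/

section

open scoped Finset Topology
open Filter Matrix

variable {ι : Type*}

lemma exists_ne_notMem_of_sum_mem {G : Type*} [AddCommGroup G] (H : AddSubgroup G)
    {s : Finset ι} {f : ι → G} {i : ι} (hsum : ∑ t ∈ s, f t ∈ H) (his : i ∈ s) (hi : f i ∉ H) :
    ∃ j ∈ s, j ≠ i ∧ f j ∉ H := by
  classical
  by_contra! hrest
  refine hi ?_
  rw [← add_sub_cancel_right (f i) (∑ t ∈ s.erase i, f t), Finset.add_sum_erase s f his]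
  exact sub_mem hsum (sum_mem fun t ht =>
    hrest t (Finset.mem_of_mem_erase ht) (Finset.ne_of_mem_erase ht))

lemma notMem_range_intCast_of_mem_Ioo {r : ℝ} (hr : r ∈ Set.Ioo 0 1) :
    r ∉ (Int.castAddHom ℝ).range := by
  rintro ⟨z, rfl⟩
  simp only [Int.coe_castAddHom, Set.mem_Ioo, Int.cast_pos] at hr
  have hz : z < 1 := by exact_mod_cast hr.2
  lia

lemma eq_zero_or_eq_one_of_mem_range_intCast {r : ℝ} (hr : r ∈ Set.Icc 0 1)
    (hint : r ∈ (Int.castAddHom ℝ).range) : r = 0 ∨ r = 1 := by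
  by_contra! hne
  exact notMem_range_intCast_of_mem_Ioo
    ⟨hr.1.lt_of_ne hne.1.symm, hr.2.lt_of_ne hne.2⟩ hint

lemma eq_zero_of_eventually_add_smul_mem {E : Type*} [AddCommGroup E] [Module ℝ E] {C : Set E}
    {x v : E} (hx : x ∈ C.extremePoints ℝ) (hv : ∀ᶠ ε : ℝ in 𝓝 0, x + ε • v ∈ C) : v = 0 := by
  have hv_neg : ∀ᶠ ε : ℝ in 𝓝 0, x + (-ε) • v ∈ C :=
    (continuous_neg.tendsto' (0 : ℝ) 0 neg_zero).eventually hv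
  obtain ⟨ε, ⟨hplus, hminus⟩, hε⟩ :=
    (((hv.and hv_neg).filter_mono nhdsWithin_le_nhds).and self_mem_nhdsWithin :
      ∀ᶠ ε : ℝ in 𝓝[>] 0, _).exists
  have hseg : x ∈ openSegment ℝ (x + ε • v) (x + (-ε) • v) :=
    ⟨1 / 2, 1 / 2, by norm_num, by norm_num, by norm_num, by module⟩
  have hεv : x + ε • v = x := hx.2 hplus hminus hseg
  exact (smul_eq_zero.1 (add_eq_left.1 hεv)).resolve_left (ne_of_gt hε)

lemma eventually_le_add_mul {m s w : ℝ} (hle : m ≤ s) (htight : s = m → w = 0) :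
    ∀ᶠ ε : ℝ in 𝓝 0, m ≤ s + ε * w := by
  rcases hle.eq_or_lt with rfl | hlt
  · simp [htight rfl]
  · have hlim : Tendsto (fun ε : ℝ => s + ε * w) (𝓝 0) (𝓝 s) :=
      Continuous.tendsto' (by fun_prop) _ _ (by simp)
    exact (hlim.eventually_const_lt hlt).mono fun _ => le_of_lt

lemma eq_or_eq_neg_of_edge_signs {a : ι → ℝ} {i j k l : ι}
    (hsep : ∀ i j k, i ≠ j → i ≠ k → 0 < a i + a j → 0 ≤ a i + a k) (hij : i ≠ j)
    (hkl : k ≠ l) (hi : 0 < a i) (haj : a j = a i) (hak : a k = -a i) (hal : a l = -a i) (m : ι) :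
    a m = a i ∨ a m = -a i := by
  by_contra! hm
  have him : i ≠ m := by rintro rfl; exact hm.1 rfl
  have hkm : k ≠ m := by rintro rfl; exact hm.2 hak
  have hmi : 0 ≤ a m + a i := by linarith [hsep i j m hij him (by linarith)]
  have hmi_pos : 0 < a m + a i := hmi.lt_of_ne fun h => hm.2 (by linarith)
  have hmk : 0 ≤ a m + a k := hsep m i k him.symm hkm.symm hmi_pos
  have hkm_nonpos : a k + a m ≤ 0 := not_lt.1 fun h => by linarith [hsep k m l hkm hkl h]
  exact hm.1 (by linarith)

/-- The hypersimplex `Δ(r)`: the slice `∑ t, x t = r` of the unit cube `[0, 1]^ι`. The edge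
polytope of `K_d` is `Δ(2)`; a real `r` is allowed so that no cast appears at `r = 2`. -/
def hypersimplex (ι : Type*) [Fintype ι] (r : ℝ) : Set (ι → ℝ) :=
  {x | (∀ t, x t ∈ Set.Icc 0 1) ∧ ∑ t, x t = r}

section Hypersimplex

variable [Fintype ι] {r b c : ℝ} {x a : ι → ℝ} {S : Finset ι}

lemma convex_hypersimplex : Convex ℝ (hypersimplex ι r) := by
  intro x hx y hy a b ha hb hab
  refine ⟨fun t => convex_Icc (0 : ℝ) 1 (hx.1 t) (hy.1 t) ha hb hab, ?_⟩
  simp only [Pi.add_apply, Pi.smul_apply, smul_eq_mul, Finset.sum_add_distrib, ← Finset.mul_sum,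
    hx.2, hy.2]
  rw [← add_mul, hab, one_mul]

lemma isCompact_hypersimplex : IsCompact (hypersimplex ι r) := by
  have hcube : IsCompact (Set.univ.pi fun _ : ι => Set.Icc (0 : ℝ) 1) :=
    isCompact_univ_pi fun _ => isCompact_Icc
  have hslice : IsClosed {x : ι → ℝ | ∑ t, x t = r} :=
    isClosed_eq (by fun_prop) continuous_const
  have heq : hypersimplex ι r = Set.univ.pi (fun _ => Set.Icc 0 1) ∩ {x | ∑ t, x t = r} :=
    Set.ext fun x => by
      simp only [hypersimplex, Set.mem_inter_iff, Set.mem_univ_pi, Set.mem_ofPred_eq]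
  exact heq ▸ hcube.inter_right hslice

lemma sum_eq_of_mem_affineSpan_hypersimplex (hx : x ∈ affineSpan ℝ (hypersimplex ι r)) :
    ∑ t, x t = r := by
  refine affineSpan_induction (p := fun y => ∑ t, y t = r) hx (fun y hy => hy.2) ?_
  intro c u v w hu hv hw
  simp [Finset.sum_add_distrib, ← Finset.mul_sum, hu, hv, hw]

lemma mem_intrinsicInterior_hypersimplex (hx : ∀ t, x t ∈ Set.Ioo 0 1) (hsum : ∑ t, x t = r) :
    x ∈ intrinsicInterior ℝ (hypersimplex ι r) := by
  have hmem : x ∈ hypersimplex ι r := ⟨fun t => Set.Ioo_subset_Icc_self (hx t), hsum⟩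
  refine mem_intrinsicInterior.2 ⟨⟨x, subset_affineSpan ℝ _ hmem⟩, ?_, rfl⟩
  have hopen : ∀ t, ∀ᶠ y : affineSpan ℝ (hypersimplex ι r) in
      𝓝 ⟨x, subset_affineSpan ℝ _ hmem⟩, y.1 t ∈ Set.Ioo 0 1 := fun t =>
    ((continuous_apply t).comp continuous_subtype_val).continuousAt.eventually_mem
      (isOpen_Ioo.mem_nhds (hx t))
  rw [mem_interior_iff_mem_nhds]
  filter_upwards [eventually_all.2 hopen] with y hy
  exact ⟨fun t => Set.Ioo_subset_Icc_self (hy t), sum_eq_of_mem_affineSpan_hypersimplex y.2⟩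

lemma sum_le_of_mem_hypersimplex (hx : x ∈ hypersimplex ι r) (s : Finset ι) :
    ∑ t ∈ s, x t ≤ r :=
  hx.2 ▸ Finset.sum_le_univ_sum_of_nonneg fun t => (hx.1 t).1

lemma eventually_add_smul_mem_hypersimplex {v : ι → ℝ} (hx : x ∈ hypersimplex ι r)
    (hv : ∑ t, v t = 0) (hv_int : ∀ t, x t ∈ (Int.castAddHom ℝ).range → v t = 0) :
    ∀ᶠ ε : ℝ in 𝓝 0, x + ε • v ∈ hypersimplex ι r := by
  have hlower (t : ι) : ∀ᶠ ε : ℝ in 𝓝 0, 0 ≤ x t + ε * v t :=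
    eventually_le_add_mul (hx.1 t).1 fun h => hv_int t ⟨0, by simp [h]⟩
  have hupper (t : ι) : ∀ᶠ ε : ℝ in 𝓝 0, -1 ≤ -x t + ε * -v t :=
    eventually_le_add_mul (neg_le_neg (hx.1 t).2) fun h =>
      neg_eq_zero.2 (hv_int t ⟨1, by simp [neg_injective h]⟩)
  filter_upwards [eventually_all.2 hlower, eventually_all.2 hupper] with ε hε₀ hε₁
  refine ⟨fun t => ⟨hε₀ t, ?_⟩, ?_⟩
  · have := hε₁ t
    simp only [Pi.add_apply, Pi.smul_apply, smul_eq_mul]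
    linarith
  · simp [Finset.sum_add_distrib, ← Finset.mul_sum, hx.2, hv]

lemma exists_fractional_partner {k m : ℤ} {i : ι} (hsum : ∑ t, x t = k)
    (hi : x i ∉ (Int.castAddHom ℝ).range) :
    ∃ j ≠ i, x j ∉ (Int.castAddHom ℝ).range ∧ (∑ t ∈ S, x t = m → (i ∈ S ↔ j ∈ S)) := by
  classical
  by_cases htight : ∑ t ∈ S, x t = m
  · have hS : ∑ t ∈ S, x t ∈ (Int.castAddHom ℝ).range := ⟨m, htight.symm⟩
    have hSc : ∑ t ∈ Sᶜ, x t ∈ (Int.castAddHom ℝ).range :=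
      ⟨k - m, by simp [← hsum, ← htight, ← Finset.sum_add_sum_compl S]⟩
    by_cases hiS : i ∈ S
    · obtain ⟨j, hjS, hji, hj⟩ := exists_ne_notMem_of_sum_mem _ hS hiS hi
      exact ⟨j, hji, hj, fun _ => iff_of_true hiS hjS⟩
    · obtain ⟨j, hjS, hji, hj⟩ := exists_ne_notMem_of_sum_mem _ hSc (Finset.mem_compl.2 hiS) hi
      exact ⟨j, hji, hj, fun _ => iff_of_false hiS (Finset.mem_compl.1 hjS)⟩
  · have huniv : ∑ t, x t ∈ (Int.castAddHom ℝ).range := ⟨k, hsum.symm⟩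
    obtain ⟨j, -, hji, hj⟩ := exists_ne_notMem_of_sum_mem _ huniv (Finset.mem_univ i) hi
    exact ⟨j, hji, hj, fun h => absurd h htight⟩

-- If the inequality is tight, the partner of a fractional coordinate lies on the same side of `S`,
-- so mass can be shifted between the two in both directions.
lemma mem_range_intCast_of_mem_extremePoints {k m : ℤ}
    (hx : x ∈ {x ∈ hypersimplex ι k | (m : ℝ) ≤ ∑ t ∈ S, x t}.extremePoints ℝ) (i : ι) :
    x i ∈ (Int.castAddHom ℝ).range := by
  classical
  obtain ⟨hxk, hxm⟩ := hx.1
  by_contra hi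
  obtain ⟨j, hji, hj, hside⟩ := exists_fractional_partner (m := m) (S := S) hxk.2 hi
  set v : ι → ℝ := Pi.single i 1 - Pi.single j 1 with hv
  have hvS : ∑ t ∈ S, x t = m → ∑ t ∈ S, v t = 0 := fun h => by
    simp [hv, Finset.sum_pi_single', hside h]
  have hv_int (t : ι) (ht : x t ∈ (Int.castAddHom ℝ).range) : v t = 0 := by
    have hti : t ≠ i := by rintro rfl; exact hi ht
    have htj : t ≠ j := by rintro rfl; exact hj ht
    simp [hv, hti, htj]
  have hv_zero : v = 0 := by
    refine eq_zero_of_eventually_add_smul_mem hx ?_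
    filter_upwards [eventually_add_smul_mem_hypersimplex hxk (by simp [hv]) hv_int,
      eventually_le_add_mul hxm hvS] with ε hεk hεm
    exact ⟨hεk, by simpa [Finset.sum_add_distrib, ← Finset.mul_sum] using hεm⟩
  simpa [hv, hji.symm] using congrFun hv_zero i

/-- The cut `1 ≤ ∑ t ∈ S, x t` of `Δ(2)`: one of the two pieces into which the hyperplane
`∑ t ∈ S, x t = 1` divides the edge polytope of `K_d`. -/
def hypersimplexCut (S : Finset ι) : Set (ι → ℝ) :=
  {x ∈ hypersimplex ι 2 | 1 ≤ ∑ t ∈ S, x t}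

lemma mem_range_intCast_of_mem_extremePoints_hypersimplexCut
    (hx : x ∈ (hypersimplexCut S).extremePoints ℝ) (i : ι) : x i ∈ (Int.castAddHom ℝ).range :=
  mem_range_intCast_of_mem_extremePoints (k := 2) (m := 1) (S := S)
    (by simpa [hypersimplexCut] using hx) i

lemma inter_le_dotProduct_eq_hypersimplexCut (hc : 0 < c)
    (ha : ∀ x ∈ hypersimplex ι 2, a ⬝ᵥ x - b = c * (∑ t ∈ S, x t - 1)) :
    hypersimplex ι 2 ∩ {x | b ≤ a ⬝ᵥ x} = hypersimplexCut S := by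
  ext x
  refine and_congr_right fun hx => ?_
  rw [Set.mem_ofPred_eq, ← sub_nonneg, ha x hx, mul_nonneg_iff_of_pos_left hc, sub_nonneg]

end Hypersimplex

section HypersimplexTwo

variable [Fintype ι] {x : ι → ℝ} {i j k : ι}

lemma two_mul_add_add_le_three (hx : x ∈ hypersimplex ι 2) (hij : i ≠ j) (hik : i ≠ k)
    (hjk : j ≠ k) : 2 * x i + x j + x k ≤ 3 := by
  classical
  have hsum := sum_le_of_mem_hypersimplex hx {i, j, k}
  rw [Finset.sum_insert (by simp [hij, hik]), Finset.sum_pair hjk] at hsum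
  linarith [(hx.1 i).2]

variable [DecidableEq ι]

lemma single_add_single_mem_hypersimplex (hij : i ≠ j) :
    Pi.single i 1 + Pi.single j 1 ∈ hypersimplex ι 2 := by
  refine ⟨fun t => ?_, by simp [Finset.sum_add_distrib, one_add_one_eq_two]⟩
  rcases eq_or_ne t i with rfl | hti
  · simp [hij]
  · rcases eq_or_ne t j with rfl | htj <;> simp [*]

lemma single_add_single_add_single_mem_hypersimplex {c : ℝ} (hij : i ≠ j) (hik : i ≠ k)
    (hc : c ∈ Set.Icc 0 1) :
    Pi.single i 1 + Pi.single j c + Pi.single k (1 - c) ∈ hypersimplex ι 2 := by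
  convert convex_hypersimplex (single_add_single_mem_hypersimplex hij)
    (single_add_single_mem_hypersimplex hik) hc.1 (sub_nonneg.2 hc.2) (by ring) using 1
  ext t
  simp only [Pi.add_apply, Pi.smul_apply, Pi.single_apply, smul_eq_mul]
  split_ifs <;> ring

lemma exists_eq_single_add_single_of_mem_hypersimplex (hx : x ∈ hypersimplex ι 2)
    (hint : ∀ t, x t ∈ (Int.castAddHom ℝ).range) :
    ∃ i j, i ≠ j ∧ x = Pi.single i 1 + Pi.single j 1 := by
  have h01 (t : ι) := eq_zero_or_eq_one_of_mem_range_intCast (hx.1 t) (hint t)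
  have hind : x = fun t => if x t = 1 then 1 else 0 := by
    ext t
    rcases h01 t with h | h <;> simp [h]
  have hcard : #{t | x t = 1} = 2 := by
    have hsum := hx.2
    rw [hind, Finset.sum_boole] at hsum
    exact_mod_cast hsum
  obtain ⟨i, j, hij, hsupp⟩ := Finset.card_eq_two.1 hcard
  have hmem (t : ι) : x t = 1 ↔ t = i ∨ t = j := by
    simpa using Finset.ext_iff.1 hsupp t
  refine ⟨i, j, hij, ?_⟩
  ext t
  rw [hind]
  simp only [hmem, Pi.add_apply, Pi.single_apply]
  rcases eq_or_ne t i with rfl | hti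
  · simp [hij]
  · rcases eq_or_ne t j with rfl | htj <;> simp [*]

lemma exists_eq_single_add_single_of_mem_extremePoints
    (hx : x ∈ (hypersimplex ι 2).extremePoints ℝ) :
    ∃ i j, i ≠ j ∧ x = Pi.single i 1 + Pi.single j 1 := by
  refine exists_eq_single_add_single_of_mem_hypersimplex hx.1
    (mem_range_intCast_of_mem_extremePoints (k := 2) (m := 0) (S := ∅) ?_)
  simpa using hx

lemma eq_of_three_le_two_mul_add_add (hx : x ∈ hypersimplex ι 2) (hij : i ≠ j) (hik : i ≠ k)
    (hjk : j ≠ k) (h3 : 3 ≤ 2 * x i + x j + x k) :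
    x = Pi.single i 1 + Pi.single j (x j) + Pi.single k (1 - x j) := by
  have hsum := sum_le_of_mem_hypersimplex hx {i, j, k}
  rw [Finset.sum_insert (by simp [hij, hik]), Finset.sum_pair hjk] at hsum
  have hi : x i = 1 := by linarith [(hx.1 i).2]
  have hk : x k = 1 - x j := by linarith
  ext t
  by_cases ht : t = i ∨ t = j ∨ t = k
  · rcases ht with rfl | rfl | rfl <;> simp [*, Ne.symm]
  · push Not at ht
    have hsum_t := sum_le_of_mem_hypersimplex hx {t, i, j, k}
    rw [Finset.sum_insert (by simp [ht]), Finset.sum_insert (by simp [hij, hik]),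
      Finset.sum_pair hjk] at hsum_t
    simpa [ht] using le_antisymm (by linarith) (hx.1 t).1

end HypersimplexTwo

-- The point where the edge from `e_i + e_j` to `e_i + e_k` crosses the hyperplane is exposed by
-- `2 e_i + e_j + e_k - a`: on the polytope `2 e_i + e_j + e_k` is maximal exactly on that edge.
lemma exists_mem_extremePoints_notMem_range_intCast [Fintype ι] {a : ι → ℝ} {i j k : ι}
    (hij : i ≠ j) (hik : i ≠ k) (hpos : 0 < a i + a j) (hneg : a i + a k < 0) :
    ∃ y ∈ (hypersimplex ι 2 ∩ {x | 0 ≤ a ⬝ᵥ x}).extremePoints ℝ,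
      y j ∉ (Int.castAddHom ℝ).range := by
  classical
  have hjk : j ≠ k := by rintro rfl; linarith
  have hgap : 0 < a j - a k := by linarith
  obtain ⟨c, hc⟩ : ∃ c, c * (a j - a k) = -(a i + a k) := ⟨_, div_mul_cancel₀ _ hgap.ne'⟩
  have hc₀ : 0 < c := pos_of_mul_pos_left (by linarith) hgap.le
  have hc₁ : c < 1 := by nlinarith
  set y : ι → ℝ := Pi.single i 1 + Pi.single j c + Pi.single k (1 - c) with hy
  have hyΔ : y ∈ hypersimplex ι 2 :=
    single_add_single_add_single_mem_hypersimplex hij hik ⟨hc₀.le, hc₁.le⟩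
  have hay : a ⬝ᵥ y = 0 := by
    simp only [hy, dotProduct_add, dotProduct_single]
    linarith
  have hyi : y i = 1 := by simp [hy, hij, hik]
  have hyj : y j = c := by simp [hy, hij.symm, hjk]
  have hyk : y k = 1 - c := by simp [hy, hik.symm, hjk.symm]
  let l : StrongDual ℝ (ι → ℝ) :=
    (2 : ℝ) • .proj i + .proj j + .proj k - (dotProductBilin ℝ ℝ a).toContinuousLinearMap
  have hl (x : ι → ℝ) : l x = 2 * x i + x j + x k - a ⬝ᵥ x := rfl
  have hly : l y = 3 := by rw [hl, hay, hyi, hyj, hyk]; ring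
  refine ⟨y, exposedPoints_subset_extremePoints ⟨⟨hyΔ, hay.ge⟩, l, ?_⟩,
    hyj ▸ notMem_range_intCast_of_mem_Ioo ⟨hc₀, hc₁⟩⟩
  rintro x ⟨hxΔ, hax : 0 ≤ a ⬝ᵥ x⟩
  have hle := two_mul_add_add_le_three hxΔ hij hik hjk
  rw [hly, hl]
  refine ⟨by linarith, fun hmax => ?_⟩
  have hx := eq_of_three_le_two_mul_add_add hxΔ hij hik hjk (by linarith)
  have hax₀ : a ⬝ᵥ x = 0 := by linarith
  have hxj : x j = c := by
    rw [hx] at hax₀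
    simp only [dotProduct_add, dotProduct_single] at hax₀
    exact mul_right_cancel₀ hgap.ne' (by linarith)
  rw [hx, hxj]

section Splits

variable [Fintype ι] [DecidableEq ι]

/-- The unordered pair of pieces of `Δ(2)` attached to the bipartition `{S, Sᶜ}`. The two halfspaces
are complementary because the coordinates sum to `2`. -/
def hypersimplexSplit (S : Finset ι) : Set (Set (ι → ℝ)) :=
  {hypersimplexCut S, hypersimplexCut Sᶜ}

/-- The sets `S` such that `S` and its complement both have at least two elements: the positive
parts of the admissible sign assignments. -/
def nontrivialSplits (ι : Type*) [Fintype ι] [DecidableEq ι] : Finset (Finset ι) :=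
  {S | 1 < #S ∧ 1 < #Sᶜ}

/-- The sign assignment `ι → {1, -1}` with positive part `S`. -/
def signVector (S : Finset ι) : ι → ℝ :=
  fun t => if t ∈ S then 1 else -1

variable {S T : Finset ι} {i j : ι} {a x : ι → ℝ} {b c : ℝ}

lemma mem_nontrivialSplits : S ∈ nontrivialSplits ι ↔ 1 < #S ∧ 1 < #Sᶜ := by
  simp only [nontrivialSplits, Finset.mem_filter_univ]

lemma compl_mem_nontrivialSplits (hS : S ∈ nontrivialSplits ι) : Sᶜ ∈ nontrivialSplits ι := by
  rw [mem_nontrivialSplits] at hS ⊢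
  rw [compl_compl]
  exact hS.symm

lemma single_add_single_mem_hypersimplexCut (hij : i ≠ j) :
    Pi.single i 1 + Pi.single j 1 ∈ hypersimplexCut S ↔ i ∈ S ∨ j ∈ S := by
  simp only [hypersimplexCut, Set.mem_ofPred_eq, single_add_single_mem_hypersimplex hij, true_and,
    Pi.add_apply, Finset.sum_add_distrib, Finset.sum_pi_single']
  by_cases hi : i ∈ S <;> by_cases hj : j ∈ S <;> simp [hi, hj]

lemma mem_iff_forall_mem_hypersimplexCut (hS : 1 < #Sᶜ) :
    i ∈ S ↔ ∀ j, i ≠ j → Pi.single i 1 + Pi.single j 1 ∈ hypersimplexCut S := by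
  refine ⟨fun hi j hij => (single_add_single_mem_hypersimplexCut hij).2 (.inl hi), fun h => ?_⟩
  obtain ⟨j, hjS, hji⟩ := Finset.exists_mem_ne hS i
  exact ((single_add_single_mem_hypersimplexCut hji.symm).1 (h j hji.symm)).resolve_right
    (Finset.mem_compl.1 hjS)

lemma injOn_hypersimplexCut : Set.InjOn hypersimplexCut {S : Finset ι | 1 < #Sᶜ} := by
  intro S hS T hT hST
  ext i
  rw [mem_iff_forall_mem_hypersimplexCut hS, mem_iff_forall_mem_hypersimplexCut hT, hST]

lemma hypersimplexSplit_eq_iff (hS : S ∈ nontrivialSplits ι) (hT : T ∈ nontrivialSplits ι) :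
    hypersimplexSplit T = hypersimplexSplit S ↔ T = S ∨ T = Sᶜ := by
  rw [mem_nontrivialSplits] at hS hT
  constructor
  · intro h
    have hmem : hypersimplexCut T ∈ hypersimplexSplit S := h ▸ Set.mem_insert _ _
    exact hmem.imp (injOn_hypersimplexCut hT.2 hS.2 ·)
      (injOn_hypersimplexCut hT.2 (by simpa using hS.1) ·)
  · rintro (rfl | rfl)
    · rfl
    · rw [hypersimplexSplit, compl_compl, Set.pair_comm, hypersimplexSplit]

lemma inter_dotProduct_le_eq_hypersimplexCut_compl (hc : 0 < c)
    (ha : ∀ x ∈ hypersimplex ι 2, a ⬝ᵥ x - b = c * (∑ t ∈ S, x t - 1)) :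
    hypersimplex ι 2 ∩ {x | a ⬝ᵥ x ≤ b} = hypersimplexCut Sᶜ := by
  have hneg : ∀ x ∈ hypersimplex ι 2, (-a) ⬝ᵥ x - -b = c * (∑ t ∈ Sᶜ, x t - 1) := fun x hx => by
    have hcompl : ∑ t ∈ Sᶜ, x t = 2 - ∑ t ∈ S, x t := by
      rw [← hx.2, ← Finset.sum_add_sum_compl S, add_sub_cancel_left]
    rw [neg_dotProduct, hcompl]
    linear_combination -ha x hx
  simpa only [neg_dotProduct, neg_le_neg_iff] using inter_le_dotProduct_eq_hypersimplexCut hc hneg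

lemma signVector_dotProduct (hx : x ∈ hypersimplex ι 2) :
    signVector S ⬝ᵥ x = 2 * (∑ t ∈ S, x t - 1) := by
  have hsign (t : ι) : signVector S t * x t = 2 * (if t ∈ S then x t else 0) - x t := by
    rw [signVector]
    split_ifs <;> ring
  simp only [dotProduct, hsign, Finset.sum_sub_distrib, ← Finset.mul_sum, Finset.sum_ite_mem,
    Finset.univ_inter, hx.2]
  ring

lemma exists_mem_intrinsicInterior_sum_eq_one (hS : S ∈ nontrivialSplits ι) :
    ∃ x ∈ intrinsicInterior ℝ (hypersimplex ι 2), x ∈ hypersimplex ι 2 ∧ ∑ t ∈ S, x t = 1 := by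
  rw [mem_nontrivialSplits] at hS
  have hmem {n : ℕ} (hn : 1 < n) : (n : ℝ)⁻¹ ∈ Set.Ioo 0 1 :=
    ⟨by positivity, inv_lt_one_of_one_lt₀ (by exact_mod_cast hn)⟩
  set x : ι → ℝ := fun t => if t ∈ S then (#S : ℝ)⁻¹ else (#Sᶜ : ℝ)⁻¹ with hx
  have hxS : ∑ t ∈ S, x t = 1 := by
    have hne : (#S : ℝ) ≠ 0 := by exact_mod_cast (zero_lt_one.trans hS.1).ne'
    rw [Finset.sum_congr rfl fun t ht => if_pos ht]
    simp [hne]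
  have hxSc : ∑ t ∈ Sᶜ, x t = 1 := by
    have hne : (#Sᶜ : ℝ) ≠ 0 := by exact_mod_cast (zero_lt_one.trans hS.2).ne'
    rw [Finset.sum_congr rfl fun t ht => if_neg (Finset.mem_compl.1 ht), Finset.sum_const,
      nsmul_eq_mul, mul_inv_cancel₀ hne]
  have hint : x ∈ intrinsicInterior ℝ (hypersimplex ι 2) := by
    refine mem_intrinsicInterior_hypersimplex (fun t => ?_) ?_
    · rw [hx]
      dsimp only
      split_ifs
      exacts [hmem hS.1, hmem hS.2]
    · rw [← Finset.sum_add_sum_compl S, hxS, hxSc, one_add_one_eq_two]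
  exact ⟨x, hint, intrinsicInterior_subset hint, hxS⟩

-- All edges between a positive edge `ij` and a negative edge `kl` have weight zero.
lemma exists_eq_smul_signVector (hpos : ∃ i j, i ≠ j ∧ 0 < a i + a j)
    (hneg : ∃ i j, i ≠ j ∧ a i + a j < 0)
    (hsep : ∀ i j k, i ≠ j → i ≠ k → 0 < a i + a j → 0 ≤ a i + a k) :
    ∃ c : ℝ, 0 < c ∧ ∃ S ∈ nontrivialSplits ι, a = c • signVector S := by
  obtain ⟨i, j, hij, hposij⟩ := hpos
  obtain ⟨k, l, hkl, hnegkl⟩ := hneg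
  have hi (m : ι) (hm : i ≠ m) : 0 ≤ a i + a m := hsep i j m hij hm hposij
  have hj (m : ι) (hm : j ≠ m) : 0 ≤ a j + a m := hsep j i m hij.symm hm (by linarith)
  have hk (m : ι) (hm : k ≠ m) : a k + a m ≤ 0 :=
    not_lt.1 fun h => (hsep k m l hm hkl h).not_gt hnegkl
  have hl (m : ι) (hm : l ≠ m) : a l + a m ≤ 0 :=
    not_lt.1 fun h => (hsep l m k hm hkl.symm h).not_gt (by linarith)
  have hik : i ≠ k := by rintro rfl; exact (hi l hkl).not_gt hnegkl
  have hil : i ≠ l := by rintro rfl; exact (hi k hkl.symm).not_gt (by linarith)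
  have hjk : j ≠ k := by rintro rfl; exact (hj l hkl).not_gt hnegkl
  have hak : a k = -a i := by linarith [hi k hik, hk i hik.symm]
  have hal : a l = -a i := by linarith [hi l hil, hl i hil.symm]
  have haj : a j = a i := by linarith [hj k hjk, hk j hjk.symm]
  have hc : 0 < a i := by linarith
  have hne : -a i ≠ a i := by linarith
  refine ⟨a i, hc, ({t | a t = a i} : Finset ι), mem_nontrivialSplits.2 ⟨?_, ?_⟩, ?_⟩
  · exact Finset.one_lt_card.2 ⟨i, by simp, j, by simp [haj], hij⟩
  · exact Finset.one_lt_card.2 ⟨k, by simp [hak, hne], l, by simp [hal, hne], hkl⟩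
  · ext t
    rcases eq_or_eq_neg_of_edge_signs hsep hij hkl hc haj hak hal t with h | h <;>
      simp [signVector, h, hne]

end Splits

section Counting

lemma two_mul_card_image_eq_card {α β : Type*} [DecidableEq β] {f : α → β}
    {g : α → α} {s : Finset α} (hgs : ∀ x ∈ s, g x ∈ s) (hg : ∀ x ∈ s, x ≠ g x)
    (hf : ∀ x ∈ s, ∀ y ∈ s, f y = f x ↔ y = x ∨ y = g x) : 2 * #(s.image f) = #s := by
  classical
  have hfiber : ∀ b ∈ s.image f, #{y ∈ s | f y = b} = 2 := by
    intro b hb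
    obtain ⟨x, hx, rfl⟩ := Finset.mem_image.1 hb
    have hpair : {y ∈ s | f y = f x} = {x, g x} := by
      ext y
      simp only [Finset.mem_filter, Finset.mem_insert, Finset.mem_singleton]
      refine ⟨fun ⟨hy, hyx⟩ => (hf x hx y hy).1 hyx, fun h => ?_⟩
      have hy : y ∈ s := by rcases h with rfl | rfl; exacts [hx, hgs x hx]
      exact ⟨hy, (hf x hx y hy).2 h⟩
    rw [hpair, Finset.card_pair (hg x hx)]
  rw [Finset.card_eq_sum_card_image f s, Finset.sum_const_nat hfiber, mul_comm]

lemma card_filter_card_le_one [Fintype ι] : #{S : Finset ι | #S ≤ 1} = Fintype.card ι + 1 := by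
  classical
  have heq : ({S | #S ≤ 1} : Finset (Finset ι)) =
      insert ∅ (Finset.univ.map ⟨singleton, Finset.singleton_injective⟩) := by
    ext S
    simp [Nat.le_one_iff_eq_zero_or_eq_one, Finset.card_eq_one, eq_comm]
  rw [heq, Finset.card_insert_of_notMem (by simp), Finset.card_map, Finset.card_univ]

variable [Fintype ι] [DecidableEq ι]

lemma card_nontrivialSplits :
    #(nontrivialSplits ι) = 2 ^ Fintype.card ι - 2 * (Fintype.card ι + 1) := by
  have hadd (S : Finset ι) : #S + #Sᶜ = Fintype.card ι := Finset.card_add_card_compl S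
  rcases lt_or_ge (Fintype.card ι) 3 with hsmall | hlarge
  · have hempty : nontrivialSplits ι = ∅ := by
      refine Finset.eq_empty_of_forall_notMem fun S hS => ?_
      have := mem_nontrivialSplits.1 hS
      have := hadd S
      lia
    rw [hempty]
    interval_cases Fintype.card ι <;> rfl
  · have hcompl : #{S : Finset ι | #Sᶜ ≤ 1} = Fintype.card ι + 1 := by
      rw [← card_filter_card_le_one (ι := ι)]
      exact Finset.card_bijective (·ᶜ) compl_involutive.bijective (by simp)
    have hdisj : Disjoint ({S | #S ≤ 1} : Finset (Finset ι))
        ({S | #Sᶜ ≤ 1} : Finset (Finset ι)) := by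
      refine Finset.disjoint_filter.2 fun S _ h₁ h₂ => ?_
      have := hadd S
      lia
    have hunion : (nontrivialSplits ι)ᶜ =
        ({S | #S ≤ 1} : Finset (Finset ι)) ∪ ({S | #Sᶜ ≤ 1} : Finset (Finset ι)) := by
      ext S
      simp only [Finset.mem_compl, mem_nontrivialSplits, Finset.mem_union, Finset.mem_filter_univ]
      lia
    have htotal := Finset.card_add_card_compl (nontrivialSplits ι)
    rw [hunion, Finset.card_union_of_disjoint hdisj, card_filter_card_le_one, hcompl,
      Fintype.card_finset] at htotal
    lia

lemma two_mul_card_image_hypersimplexSplit [DecidableEq (Set (Set (ι → ℝ)))] :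
    2 * #((nontrivialSplits ι).image hypersimplexSplit) =
      2 ^ Fintype.card ι - 2 * (Fintype.card ι + 1) := by
  rw [← card_nontrivialSplits]
  refine two_mul_card_image_eq_card (g := (·ᶜ)) (fun S => compl_mem_nontrivialSplits)
    (fun S hS => ?_) fun S hS T hT => hypersimplexSplit_eq_iff hS hT
  have hne : S.Nonempty := Finset.card_pos.1 (zero_lt_one.trans (mem_nontrivialSplits.1 hS).1)
  have : Nonempty ι := hne.to_type
  exact ne_compl_self

end Counting

section EdgePolytope

variable {d : ℕ} {a x : Fin d → ℝ} {b : ℝ}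

lemma dotp_eq_dotProduct (a x : Fin d → ℝ) : dotp a x = a ⬝ᵥ x := rfl

lemma rho_eq_single_add_single (i j : Fin d) : rho i j = Pi.single i 1 + Pi.single j 1 := by
  ext t
  simp [rho, Pi.single_apply]

lemma edgePolytope_top : edgePolytope (⊤ : SimpleGraph (Fin d)) = hypersimplex (Fin d) 2 := by
  refine (convexHull_min ?_ convex_hypersimplex).antisymm ?_
  · rintro _ ⟨i, j, hij, rfl⟩
    exact rho_eq_single_add_single i j ▸ single_add_single_mem_hypersimplex hij
  · have hfin : {x | ∃ i j, (⊤ : SimpleGraph (Fin d)).Adj i j ∧ x = rho i j}.Finite :=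
      (Set.finite_range fun p : Fin d × Fin d => rho p.1 p.2).subset
        fun x ⟨i, j, _, hx⟩ => ⟨(i, j), hx.symm⟩
    rw [← closure_convexHull_extremePoints isCompact_hypersimplex convex_hypersimplex]
    refine closure_minimal (convexHull_mono fun x hx => ?_) (hfin.isClosed_convexHull ℝ)
    obtain ⟨i, j, hij, rfl⟩ := exists_eq_single_add_single_of_mem_extremePoints hx
    exact ⟨i, j, hij, (rho_eq_single_add_single i j).symm⟩

lemma isIntegralSet_iff {P : Set (Fin d → ℝ)} :
    IsIntegralSet P ↔ ∀ x ∈ P.extremePoints ℝ, ∀ t, x t ∈ (Int.castAddHom ℝ).range := by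
  simp only [IsIntegralSet, AddMonoidHom.mem_range, Int.coe_castAddHom, eq_comm]

lemma isIntegralSet_hypersimplexCut (S : Finset (Fin d)) : IsIntegralSet (hypersimplexCut S) :=
  isIntegralSet_iff.2 fun _ => mem_range_intCast_of_mem_extremePoints_hypersimplexCut

lemma exists_edge_pos (hx : x ∈ hypersimplex (Fin d) 2) (hax : 0 < a ⬝ᵥ x) :
    ∃ i j, i ≠ j ∧ 0 < a i + a j := by
  rw [← edgePolytope_top] at hx
  obtain ⟨_, ⟨i, j, hij, rfl⟩, hle⟩ := ((dotProductBilin ℝ ℝ a).convexOn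
    convex_univ).exists_ge_of_mem_convexHull (Set.subset_univ _) hx
  refine ⟨i, j, hij, hax.trans_le ?_⟩
  simpa [rho_eq_single_add_single, dotProductBilin, dotProduct_add] using hle

lemma exists_eq_smul_signVector_of_isIntegralSet
    (hint : IsIntegralSet (hypersimplex (Fin d) 2 ∩ {x | 0 ≤ a ⬝ᵥ x}))
    (hpos : ∃ x ∈ hypersimplex (Fin d) 2, 0 < a ⬝ᵥ x)
    (hneg : ∃ x ∈ hypersimplex (Fin d) 2, a ⬝ᵥ x < 0) :
    ∃ c : ℝ, 0 < c ∧ ∃ S ∈ nontrivialSplits (Fin d), a = c • signVector S := by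
  obtain ⟨x, hx, hax⟩ := hpos
  obtain ⟨y, hy, hay⟩ := hneg
  refine exists_eq_smul_signVector (exists_edge_pos hx hax) ?_ ?_
  · obtain ⟨i, j, hij, h⟩ := exists_edge_pos (a := -a) hy (by simpa using hay)
    exact ⟨i, j, hij, by simpa [← neg_add_rev, add_comm] using h⟩
  · intro i j k hij hik h
    by_contra! hneg
    obtain ⟨z, hz, hzj⟩ := exists_mem_extremePoints_notMem_range_intCast hij hik h hneg
    exact hzj (isIntegralSet_iff.1 hint z hz j)

-- On `Δ(2)` the affine function `a ⬝ᵥ x - b` agrees with the linear one with weights `a - b / 2`.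
lemma Decomposes.exists_eq_hypersimplexSplit (h : Decomposes (hypersimplex (Fin d) 2) a b) :
    ∃ S ∈ nontrivialSplits (Fin d), {hypersimplex (Fin d) 2 ∩ {x | b ≤ dotp a x},
      hypersimplex (Fin d) 2 ∩ {x | dotp a x ≤ b}} = hypersimplexSplit S := by
  obtain ⟨-, ⟨y, hy, hyb⟩, ⟨z, hz, hzb⟩, hint, -⟩ := h
  simp only [dotp_eq_dotProduct] at *
  set a₀ : Fin d → ℝ := a - (b / 2) • 1 with ha₀
  have hshift : ∀ x ∈ hypersimplex (Fin d) 2, a₀ ⬝ᵥ x = a ⬝ᵥ x - b := fun x hx => by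
    simp [ha₀, sub_dotProduct, one_dotProduct, hx.2]
  have hhalf : hypersimplex (Fin d) 2 ∩ {x | b ≤ a ⬝ᵥ x} =
      hypersimplex (Fin d) 2 ∩ {x | 0 ≤ a₀ ⬝ᵥ x} :=
    Set.ext fun x => and_congr_right fun hx => by
      rw [Set.mem_ofPred_eq, Set.mem_ofPred_eq, hshift x hx, sub_nonneg]
  obtain ⟨c, hc, S, hS, haS⟩ := exists_eq_smul_signVector_of_isIntegralSet (hhalf ▸ hint)
    ⟨z, hz, by rw [hshift z hz]; linarith⟩ ⟨y, hy, by rw [hshift y hy]; linarith⟩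
  have hcut : ∀ x ∈ hypersimplex (Fin d) 2, a ⬝ᵥ x - b = c * 2 * (∑ t ∈ S, x t - 1) :=
    fun x hx => by
      rw [← hshift x hx, haS, smul_dotProduct, signVector_dotProduct hx, smul_eq_mul, mul_assoc]
  refine ⟨S, hS, ?_⟩
  rw [inter_le_dotProduct_eq_hypersimplexCut (by positivity) hcut,
    inter_dotProduct_le_eq_hypersimplexCut_compl (by positivity) hcut, hypersimplexSplit]

lemma exists_decomposes_of_mem_nontrivialSplits {S : Finset (Fin d)}
    (hS : S ∈ nontrivialSplits (Fin d)) :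
    ∃ a b, Decomposes (hypersimplex (Fin d) 2) a b ∧
      hypersimplexSplit S = {hypersimplex (Fin d) 2 ∩ {x | b ≤ dotp a x},
        hypersimplex (Fin d) 2 ∩ {x | dotp a x ≤ b}} := by
  have hcut : ∀ x ∈ hypersimplex (Fin d) 2,
      signVector S ⬝ᵥ x - 0 = 2 * (∑ t ∈ S, x t - 1) := fun x hx => by
    rw [sub_zero, signVector_dotProduct hx]
  have hge := inter_le_dotProduct_eq_hypersimplexCut two_pos hcut
  have hle := inter_dotProduct_le_eq_hypersimplexCut_compl two_pos hcut
  obtain ⟨x, hxint, hx, hxS⟩ := exists_mem_intrinsicInterior_sum_eq_one hS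
  obtain ⟨i, hi, j, hj, hij⟩ := Finset.one_lt_card.1 (mem_nontrivialSplits.1 hS).1
  obtain ⟨k, hk, l, hl, hkl⟩ := Finset.one_lt_card.1 (mem_nontrivialSplits.1 hS).2
  rw [Finset.mem_compl] at hk hl
  refine ⟨signVector S, 0, ⟨⟨x, hxint, ?_⟩, ⟨_, single_add_single_mem_hypersimplex hkl, ?_⟩,
    ⟨_, single_add_single_mem_hypersimplex hij, ?_⟩, ?_, ?_⟩, ?_⟩ <;>
    simp only [dotp_eq_dotProduct]
  · rw [signVector_dotProduct hx, hxS, sub_self, mul_zero]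
  · simp [signVector, dotProduct_add, hk, hl]
  · simp [signVector, dotProduct_add, hi, hj]
  · exact hge ▸ isIntegralSet_hypersimplexCut S
  · exact hle ▸ isIntegralSet_hypersimplexCut Sᶜ
  · rw [hge, hle, hypersimplexSplit]

end EdgePolytope

end

/-- the number of decompositions of the edge polytope of the complete
graph K_d equals 2^(d-1) - d - 1. -/
theorem stmt13 (d : ℕ) :
    Nat.card {s : Set (Set (Fin d → ℝ)) //
      ∃ (a : Fin d → ℝ) (b : ℝ),
        Decomposes (edgePolytope (⊤ : SimpleGraph (Fin d))) a b ∧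
        s = {edgePolytope (⊤ : SimpleGraph (Fin d)) ∩ {x | b ≤ dotp a x},
             edgePolytope (⊤ : SimpleGraph (Fin d)) ∩ {x | dotp a x ≤ b}}} =
    2 ^ (d - 1) - d - 1 := by
  classical
  rw [edgePolytope_top, Nat.subtype_card ((nontrivialSplits (Fin d)).image hypersimplexSplit)]
  · have hcard := two_mul_card_image_hypersimplexSplit (ι := Fin d)
    rw [Fintype.card_fin] at hcard
    cases d <;> lia
  · intro s
    simp only [Finset.mem_image]
    constructor
    · rintro ⟨S, hS, rfl⟩
      exact exists_decomposes_of_mem_nontrivialSplits hS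
    · rintro ⟨a, b, hab, rfl⟩
      obtain ⟨S, hS, hsplit⟩ := hab.exists_eq_hypersimplexSplit
      exact ⟨S, hS, hsplit.symm⟩
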